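/- arXiv:2308.03071 — 2 statements merged into one kernel-verified Lean document; each statement's English description precedes it below -/
import Mathlib

section
/- Let d ≥ 2. For every unimodular lattice Λ ⊆ K̃^d there exists a diagonal matrix a = diag(a₁,…,a_d) with a₁,…,a_d ∈ K̃^* and a₁⋯a_d = 1 (i.e. a ∈ A, the diagonal subgroup of SL_d(K̃)) such that aΛ is well rounded; that is, every A-orbit of unimodular lattices contains a well rounded lattice. -/
noncomputable section

open scoped Classical

variable (Fq : Type) [Field Fq] [Fintype Fq]

/-- `K̃ = 𝔽_q((x⁻¹))`, realized as formal Laurent series in `t = x⁻¹`. -/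
abbrev Kt := LaurentSeries Fq

/-- The element `x` of `K̃` (the inverse of the Laurent series variable). -/
def Kx : Kt Fq := HahnSeries.single (-1 : ℤ) 1

/-- Absolute value `|f| = q^{deg f}`, i.e. `q^{-order f}` in terms of `t = x⁻¹`. -/
def Kabs (f : Kt Fq) : ℝ := if f = 0 then 0 else (Fintype.card Fq : ℝ) ^ (-f.order)

/-- The ring embedding of `R = 𝔽_q[x]` into `K̃`. -/
def polyK : Polynomial Fq →+* Kt Fq := (Polynomial.aeval (Kx Fq)).toRingHom

/-- Sup norm on `K̃^d`. -/
def vnorm {d : ℕ} (v : Fin d → Kt Fq) : ℝ := ⨆ i, Kabs Fq (v i)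

/-- The lattice `g·R^d`. -/
def lattice {d : ℕ} (g : Matrix (Fin d) (Fin d) (Kt Fq)) : Set (Fin d → Kt Fq) :=
  {v | ∃ c : Fin d → Polynomial Fq, v = g.mulVec fun j => polyK Fq (c j)}

/-- `i`-th successive minimum of `Λ` with respect to a norm `nrm`: the least `r > 0` such that
`Λ` contains `i` linearly independent vectors of norm at most `r`. -/
def minimaN {d : ℕ} (nrm : (Fin d → Kt Fq) → ℝ) (Λ : Set (Fin d → Kt Fq)) (i : ℕ) : ℝ :=
  sInf {r : ℝ | 0 < r ∧ ∃ v : Fin i → Fin d → Kt Fq,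
    (∀ j, v j ∈ Λ) ∧ LinearIndependent (Kt Fq) v ∧ ∀ j, nrm (v j) ≤ r}

/-- `i`-th successive minimum with respect to the sup norm. -/
def minima {d : ℕ} (Λ : Set (Fin d → Kt Fq)) (i : ℕ) : ℝ := minimaN Fq (vnorm Fq) Λ i

/-- Covering radius of `Λ` with respect to the norm `nrm`. -/
def covRad {d : ℕ} (nrm : (Fin d → Kt Fq) → ℝ) (Λ : Set (Fin d → Kt Fq)) : ℝ :=
  ⨆ w : Fin d → Kt Fq, ⨅ u : Λ, nrm (w - u.1)

/-- Length of the shortest nonzero vector of `Λ`. -/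
def ell {d : ℕ} (Λ : Set (Fin d → Kt Fq)) : ℝ :=
  sInf {r : ℝ | ∃ v ∈ Λ, v ≠ 0 ∧ vnorm Fq v = r}

/-- `Λ` is well rounded: it contains `d` linearly independent vectors of norm `ℓ(Λ)`. -/
def IsWellRounded {d : ℕ} (Λ : Set (Fin d → Kt Fq)) : Prop :=
  ∃ v : Fin d → Fin d → Kt Fq, (∀ j, v j ∈ Λ) ∧ LinearIndependent (Kt Fq) v ∧
    ∀ j, vnorm Fq (v j) = ell Fq Λ

/-- The multiplicative "norm" `N(v) = ∏ |v i|`. -/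
def Nprod {d : ℕ} (v : Fin d → Kt Fq) : ℝ := ∏ i, Kabs Fq (v i)

/-- The Minkowski function `μ(Λ) = sup_w inf_{u ∈ Λ} N(w - u)`. -/
def mink {d : ℕ} (Λ : Set (Fin d → Kt Fq)) : ℝ :=
  ⨆ w : Fin d → Kt Fq, ⨅ u : Λ, Nprod Fq (w - u.1)

/-!
Call a box `{v | ∀ i, nᵢ < ord vᵢ}` empty for `Λ` if it contains no nonzero vector of `Λ`. A
lattice has empty boxes, and by Minkowski's convex body theorem their volumes are bounded, so some
empty box has maximal volume. Enlarging its `j`-th side by a factor `q` then captures a vector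
`vⱼ ∈ Λ` with `ord (vⱼ)ⱼ = nⱼ` and `ord (vⱼ)ᵢ > nᵢ` for `i ≠ j`. After the diagonal rescaling by
`x ^ nᵢ` the matrix `V` with columns `vⱼ` is diagonal and invertible modulo `x⁻¹`, so it lies in
`GL_d(𝒪)`, where `𝒪 = 𝔽_q⟦x⁻¹⟧`. Dividing by `V` and rounding to polynomials leaves a remainder in
the empty box, whence the rescaled lattice is `V R^d`. As `V` is an isometry, this lattice is well
rounded, and comparing determinants gives `∑ nᵢ = 0`.
-/

section

open scoped Polynomial PowerSeries LaurentSeries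
open Matrix

/-! ### Orders of Laurent series -/

section Order

theorem lt_orderTop_iff_forall_coeff_eq_zero {Γ R : Type*} [LinearOrder Γ] [Zero R]
    {f : HahnSeries Γ R} {n : Γ} : (n : WithTop Γ) < f.orderTop ↔ ∀ k ≤ n, f.coeff k = 0 := by
  refine ⟨fun h k hk => HahnSeries.coeff_eq_zero_of_lt_orderTop
    ((WithTop.coe_le_coe.2 hk).trans_lt h), fun h => ?_⟩
  by_contra! hle
  obtain ⟨k, hk⟩ := WithTop.ne_top_iff_exists.1 (hle.trans_lt (WithTop.coe_lt_top n)).ne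
  exact HahnSeries.coeff_orderTop_ne hk.symm (h k (WithTop.coe_le_coe.1 (hk.trans_le hle)))

theorem exists_forall_le_orderTop {ι R : Type*} [Finite ι] [Zero R] (f : ι → R⸨X⸩) :
    ∃ m : ℤ, ∀ i, (m : WithTop ℤ) ≤ (f i).orderTop := by
  obtain ⟨m, hm⟩ := (Set.finite_range fun i => (f i).order).bddBelow
  refine ⟨m, fun i => HahnSeries.le_orderTop_iff_forall.2 fun k hk =>
    HahnSeries.coeff_eq_zero_of_lt_order ?_⟩
  exact (WithTop.coe_lt_coe.1 hk).trans_le (hm ⟨i, rfl⟩)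

theorem pos_orderTop_single_neg_mul_iff {R : Type*} [Semiring R] [Nontrivial R] [NoZeroDivisors R]
    (n : ℤ) (f : R⸨X⸩) :
    0 < (HahnSeries.single (-n) 1 * f).orderTop ↔ (n : WithTop ℤ) < f.orderTop := by
  rw [HahnSeries.orderTop_mul, HahnSeries.orderTop_single one_ne_zero]
  cases f.orderTop with
  | top => simp
  | coe m => norm_cast; omega

theorem prod_single_one {ι Γ R : Type*} [AddCommMonoid Γ] [PartialOrder Γ]
    [IsOrderedCancelAddMonoid Γ] [CommSemiring R] (s : Finset ι) (n : ι → Γ) :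
    ∏ i ∈ s, (HahnSeries.single (n i) 1 : HahnSeries Γ R) =
      HahnSeries.single (∑ i ∈ s, n i) 1 := by
  induction s using Finset.cons_induction with
  | empty => rfl
  | cons a s ha ih => simp only [Finset.prod_cons, Finset.sum_cons, ih,
      HahnSeries.single_mul_single, mul_one]

variable {R : Type*} [Ring R] [IsDomain R] {ι κ : Type*} [Fintype κ]

theorem le_orderTop_mulVec {A : Matrix ι κ R⸨X⸩} {v : κ → R⸨X⸩} {a b : WithTop ℤ}
    (hA : ∀ i j, a ≤ (A i j).orderTop) (hv : ∀ j, b ≤ (v j).orderTop) (i : ι) :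
    a + b ≤ ((A *ᵥ v) i).orderTop :=
  (HahnSeries.addVal ℤ R).map_le_sum fun j _ =>
    (add_le_add (hA i j) (hv j)).trans HahnSeries.orderTop_add_le_mul

theorem lt_orderTop_mulVec {A : Matrix ι κ R⸨X⸩} {v : κ → R⸨X⸩} {a b : ℤ}
    (hA : ∀ i j, (a : WithTop ℤ) ≤ (A i j).orderTop)
    (hv : ∀ j, (b : WithTop ℤ) < (v j).orderTop) (i : ι) :
    ((a + b : ℤ) : WithTop ℤ) < ((A *ᵥ v) i).orderTop := by
  refine (HahnSeries.addVal ℤ R).map_lt_sum (WithTop.coe_ne_top (a := a + b)) fun j _ => ?_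
  exact (WithTop.add_lt_add_of_le_of_lt WithTop.coe_ne_top (hA i j) (hv j)).trans_le
    HahnSeries.orderTop_add_le_mul

end Order

/-! ### Integral matrices -/

section IntegralGL

theorem orderTop_ofPowerSeries_nonneg {R : Type*} [Semiring R] (p : R⟦X⟧) :
    0 ≤ (HahnSeries.ofPowerSeries ℤ R p).orderTop :=
  HahnSeries.le_orderTop_iff_forall.2 fun k hk => by
    rw [PowerSeries.coeff_coe, if_pos (WithTop.coe_lt_coe.1 hk)]

theorem ofPowerSeries_mk_coeff {R : Type*} [Semiring R] {f : R⸨X⸩} (hf : 0 ≤ f.orderTop) :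
    HahnSeries.ofPowerSeries ℤ R (PowerSeries.mk fun n => f.coeff n) = f := by
  ext k
  rw [PowerSeries.coeff_coe, PowerSeries.coeff_mk]
  split_ifs with hk
  · exact (HahnSeries.coeff_eq_zero_of_lt_orderTop ((WithTop.coe_lt_coe.2 hk).trans_le hf)).symm
  · rw [Int.natAbs_of_nonneg (not_lt.1 hk)]

variable {R : Type*} [CommRing R] {ι : Type*} [Fintype ι] [DecidableEq ι]

variable (R ι) in
/-- The group `GL_d(𝒪)` of integral matrices with integral inverse, where `𝒪 = R⟦t⟧`, encoded as a
subgroup of `GL_d(R((t)))`. Over a finite field it acts on `K̃^d` by isometries. -/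
def integralGL : Subgroup (GL ι R⸨X⸩) :=
  (GeneralLinearGroup.map (HahnSeries.ofPowerSeries ℤ R)).range

theorem orderTop_apply_nonneg_of_mem_integralGL {V : GL ι R⸨X⸩} (hV : V ∈ integralGL R ι)
    (i j : ι) : 0 ≤ (V i j).orderTop := by
  obtain ⟨W, rfl⟩ := hV
  exact orderTop_ofPowerSeries_nonneg _

theorem orderTop_det_nonneg_of_mem_integralGL {V : GL ι R⸨X⸩} (hV : V ∈ integralGL R ι) :
    0 ≤ V.val.det.orderTop := by
  obtain ⟨W, rfl⟩ := hV
  have hdet : (GeneralLinearGroup.map (HahnSeries.ofPowerSeries ℤ R) W).val.det =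
      HahnSeries.ofPowerSeries ℤ R W.val.det := (RingHom.map_det _ _).symm
  exact hdet ▸ orderTop_ofPowerSeries_nonneg _

theorem orderTop_det_of_mem_integralGL [IsDomain R] {V : GL ι R⸨X⸩} (hV : V ∈ integralGL R ι) :
    V.val.det.orderTop = 0 := by
  have hsum : V.val.det.orderTop + V⁻¹.val.det.orderTop = 0 := by
    rw [← HahnSeries.orderTop_mul, ← det_mul, Units.mul_inv, det_one, HahnSeries.orderTop_one]
  exact ((add_eq_zero_iff_of_nonneg (orderTop_det_nonneg_of_mem_integralGL hV)
    (orderTop_det_nonneg_of_mem_integralGL (inv_mem hV))).1 hsum).1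

theorem exists_mem_integralGL_of_orderTop {F : Type*} [Field F] {A : Matrix ι ι F⸨X⸩}
    (hdiag : ∀ i, (A i i).orderTop = 0) (hoff : ∀ i j, i ≠ j → 0 < (A i j).orderTop) :
    ∃ V ∈ integralGL F ι, V.val = A := by
  have hA (i j) : 0 ≤ (A i j).orderTop := by
    rcases eq_or_ne i j with rfl | hij
    exacts [(hdiag i).ge, (hoff i j hij).le]
  let W : Matrix ι ι F⟦X⟧ := of fun i j => PowerSeries.mk fun n => (A i j).coeff n
  have hWA : W.map (HahnSeries.ofPowerSeries ℤ F) = A := by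
    ext1 i j
    exact ofPowerSeries_mk_coeff (hA i j)
  have hres : W.map (PowerSeries.constantCoeff (R := F)) =
      diagonal fun i => (A i i).coeff 0 := by
    ext i j
    rcases eq_or_ne i j with rfl | hij
    · simp [W, ← PowerSeries.coeff_zero_eq_constantCoeff_apply]
    · simp [W, ← PowerSeries.coeff_zero_eq_constantCoeff_apply, diagonal_apply_ne _ hij,
        HahnSeries.coeff_eq_zero_of_lt_orderTop (hoff i j hij)]
  have hW : IsUnit W.det := by
    rw [PowerSeries.isUnit_iff_constantCoeff, RingHom.map_det, RingHom.mapMatrix_apply, hres,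
      det_diagonal, isUnit_iff_ne_zero, Finset.prod_ne_zero_iff]
    exact fun i _ => HahnSeries.coeff_orderTop_ne (hdiag i)
  exact ⟨_, ⟨GeneralLinearGroup.mk'' W hW, rfl⟩, hWA⟩

end IntegralGL

/-! ### Polynomials inside Laurent series -/

section Polynomial

variable {F : Type} [Field F]

theorem polyK_C (a : F) : polyK F (Polynomial.C a) = HahnSeries.C a := by
  change Polynomial.aeval (Kx F) (Polynomial.C a) = _
  rw [Polynomial.aeval_C, HahnSeries.algebraMap_apply', PowerSeries.algebraMap_apply,
    Algebra.algebraMap_self, RingHom.id_apply, HahnSeries.ofPowerSeries_C]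

theorem polyK_smul (a : F) (p : F[X]) : polyK F (a • p) = (HahnSeries.C a : Kt F) • polyK F p := by
  rw [Polynomial.smul_eq_C_mul, map_mul, polyK_C, smul_eq_mul]

theorem polyK_monomial (k : ℕ) (a : F) :
    polyK F (Polynomial.monomial k a) = HahnSeries.single (-(k : ℤ)) a := by
  have hX : polyK F Polynomial.X = Kx F := Polynomial.aeval_X (Kx F)
  rw [← Polynomial.C_mul_X_pow_eq_monomial, map_mul, map_pow, polyK_C, hX]
  simp [Kx, HahnSeries.C_apply, HahnSeries.single_pow]

theorem coeff_polyK (p : F[X]) (n : ℤ) :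
    (polyK F p).coeff n = if n ≤ 0 then p.coeff (-n).toNat else 0 := by
  induction p using Polynomial.induction_on' with
  | add p q hp hq =>
    rw [map_add, HahnSeries.coeff_add, hp, hq]
    split_ifs <;> simp
  | monomial k a =>
    rw [polyK_monomial, HahnSeries.coeff_single, Polynomial.coeff_monomial]
    grind

theorem orderTop_polyK_nonpos {p : F[X]} (hp : p ≠ 0) : (polyK F p).orderTop ≤ 0 := by
  refine (HahnSeries.orderTop_le_of_coeff_ne_zero (g := -(p.natDegree : ℤ)) ?_).trans ?_
  · simpa [coeff_polyK] using hp
  · exact WithTop.coe_le_coe.2 (by omega)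

theorem neg_lt_orderTop_polyK {p : F[X]} {N : ℕ} (hp : p ∈ Polynomial.degreeLT F N) :
    ((-N : ℤ) : WithTop ℤ) < (polyK F p).orderTop := by
  refine lt_orderTop_iff_forall_coeff_eq_zero.2 fun k hk => ?_
  rw [coeff_polyK, if_pos (by omega)]
  refine Polynomial.coeff_eq_zero_of_degree_lt ((Polynomial.mem_degreeLT.1 hp).trans_le ?_)
  exact Nat.cast_le.2 (by omega)

theorem exists_polyK_sub_pos_orderTop (f : F⸨X⸩) :
    ∃ p : F[X], 0 < (f - polyK F p).orderTop := by
  refine ⟨∑ k ∈ Finset.range ((-f.order).toNat + 1),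
    Polynomial.monomial k (f.coeff (-(k : ℤ))),
    lt_orderTop_iff_forall_coeff_eq_zero.2 fun n hn => ?_⟩
  rw [HahnSeries.coeff_sub, coeff_polyK, if_pos hn, Polynomial.finsetSum_coeff]
  simp only [Polynomial.coeff_monomial, Finset.sum_ite_eq', Finset.mem_range]
  split_ifs with h
  · rw [Int.toNat_of_nonneg (by omega), neg_neg, sub_self]
  · rw [HahnSeries.coeff_eq_zero_of_lt_order (by omega), sub_zero]

end Polynomial

/-! ### Lattices -/

section Lattice

variable {F : Type} [Field F] {d : ℕ}

theorem image_lattice_eq_lattice_diagonal_mul (a : Fin d → Kt F)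
    (g : Matrix (Fin d) (Fin d) (Kt F)) :
    (fun v i => a i * v i) '' lattice F g = lattice F (diagonal a * g) := by
  have hmul (v : Fin d → Kt F) : (diagonal a * g) *ᵥ v = fun i => a i * (g *ᵥ v) i := by
    ext1 i
    rw [← mulVec_mulVec, mulVec_diagonal]
  ext v
  constructor
  · rintro ⟨_, ⟨c, rfl⟩, rfl⟩
    exact ⟨c, (hmul _).symm⟩
  · rintro ⟨c, rfl⟩
    exact ⟨_, ⟨c, rfl⟩, (hmul _).symm⟩

theorem col_mem_lattice (g : Matrix (Fin d) (Fin d) (Kt F)) (j : Fin d) :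
    g.col j ∈ lattice F g := by
  refine ⟨Pi.single j 1, ?_⟩
  rw [← mulVec_single_one]
  congr 1
  ext1 k
  rcases eq_or_ne k j with rfl | hkj
  · simp
  · simp [hkj]

theorem exists_eq_mul_map_polyK {A B : Matrix (Fin d) (Fin d) (Kt F)}
    (h : ∀ j, A.col j ∈ lattice F B) :
    ∃ P : Matrix (Fin d) (Fin d) F[X], A = B * P.map (polyK F) := by
  choose c hc using h
  exact ⟨of fun i j => c j i, ext_col hc⟩

theorem lattice_mul_map_polyK_subset (B : Matrix (Fin d) (Fin d) (Kt F))
    (P : Matrix (Fin d) (Fin d) F[X]) : lattice F (B * P.map (polyK F)) ⊆ lattice F B := by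
  rintro _ ⟨c, rfl⟩
  refine ⟨P *ᵥ c, ?_⟩
  rw [← mulVec_mulVec]
  congr 1
  ext1 i
  exact (RingHom.map_mulVec (polyK F) P c i).symm

theorem sub_mem_lattice {g : Matrix (Fin d) (Fin d) (Kt F)} {v w : Fin d → Kt F}
    (hv : v ∈ lattice F g) (hw : w ∈ lattice F g) : v - w ∈ lattice F g := by
  obtain ⟨c, rfl⟩ := hv
  obtain ⟨e, rfl⟩ := hw
  refine ⟨c - e, ?_⟩
  rw [← mulVec_sub]
  congr 1
  ext1 i
  exact (map_sub (polyK F) (c i) (e i)).symm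

theorem orderTop_det_le_of_lattice_subset {A B : Matrix (Fin d) (Fin d) (Kt F)}
    (h : lattice F A ⊆ lattice F B) (hA : A.det ≠ 0) : A.det.orderTop ≤ B.det.orderTop := by
  obtain ⟨P, rfl⟩ := exists_eq_mul_map_polyK fun j => h (col_mem_lattice A j)
  have hdet : (P.map (polyK F)).det = polyK F P.det := (RingHom.map_det _ _).symm
  rw [det_mul, hdet] at hA ⊢
  have hP : P.det ≠ 0 := fun h0 => hA (by rw [h0, map_zero, mul_zero])
  rw [HahnSeries.orderTop_mul]
  exact add_le_of_nonpos_right (orderTop_polyK_nonpos hP)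

end Lattice

/-! ### Empty boxes -/

section EmptyBox

variable {F : Type} [Field F] {d : ℕ}

/-- The box `{v | ∀ i, nᵢ < ord vᵢ}` contains no nonzero vector of `Λ`. Since
`|vᵢ| = q ^ (-ord vᵢ)`, the box shrinks as the `nᵢ` grow. -/
def IsEmptyBox (Λ : Set (Fin d → Kt F)) (n : Fin d → ℤ) : Prop :=
  ∀ v ∈ Λ, (∀ i, (n i : WithTop ℤ) < (v i).orderTop) → v = 0

theorem exists_isEmptyBox_lattice {g : Matrix (Fin d) (Fin d) (Kt F)} (hg : g.det ≠ 0) :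
    ∃ n, IsEmptyBox (lattice F g) n := by
  obtain ⟨m, hm⟩ := exists_forall_le_orderTop fun p : Fin d × Fin d => g⁻¹ p.1 p.2
  refine ⟨fun _ => -m, ?_⟩
  rintro _ ⟨c, rfl⟩ hc
  have hinv : g⁻¹ *ᵥ (g *ᵥ fun j => polyK F (c j)) = fun j => polyK F (c j) := by
    rw [mulVec_mulVec, nonsing_inv_mul _ hg.isUnit, one_mulVec]
  have hc0 (j) : c j = 0 := by
    by_contra hj
    have hpos := lt_orderTop_mulVec (fun i j => hm (i, j)) hc j
    rw [hinv, add_neg_cancel] at hpos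
    exact (orderTop_polyK_nonpos hj).not_gt hpos
  simp only [hc0, map_zero]
  exact mulVec_zero g

theorem exists_ne_zero_forall_coeff_mulVec_eq_zero (g : Matrix (Fin d) (Fin d) (Kt F)) {N : ℕ}
    {S : Fin d → Finset ℤ} (hS : ∑ i, (S i).card < d * N) :
    ∃ c : Fin d → F[X], c ≠ 0 ∧ (∀ j, c j ∈ Polynomial.degreeLT F N) ∧
      ∀ i, ∀ k ∈ S i, ((g *ᵥ fun j => polyK F (c j)) i).coeff k = 0 := by
  let T : (Fin d → Polynomial.degreeLT F N) →ₗ[F] ((i : Fin d) → S i → F) :=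
    { toFun c i k := ((g *ᵥ fun j => polyK F (c j)) i).coeff k
      map_add' c e := by
        have hadd : (fun j => polyK F ((c + e) j)) =
            (fun j => polyK F (c j)) + fun j => polyK F (e j) :=
          funext fun j => map_add (polyK F) _ _
        ext i k
        rw [hadd, mulVec_add, Pi.add_apply, HahnSeries.coeff_add]
        rfl
      map_smul' a c := by
        have hsmul : (fun j => polyK F ((a • c) j)) =
            (HahnSeries.C a : Kt F) • fun j => polyK F (c j) :=
          funext fun j => polyK_smul a _
        ext i k
        rw [hsmul, mulVec_smul, Pi.smul_apply, smul_eq_mul, HahnSeries.C_mul_eq_smul,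
          HahnSeries.coeff_smul]
        rfl }
  have hdim : Module.finrank F ((i : Fin d) → S i → F) <
      Module.finrank F (Fin d → Polynomial.degreeLT F N) := by
    simpa [Module.finrank_pi_fintype, (Polynomial.degreeLTEquiv F N).finrank_eq] using hS
  obtain ⟨c, hcT, hc⟩ := (LinearMap.ker T).ne_bot_iff.1 (LinearMap.ker_ne_bot_of_finrank_lt hdim)
  exact ⟨fun j => c j, fun h => hc (funext fun j => Subtype.ext (congrFun h j)),
    fun j => (c j).2, fun i k hk => congrFun (congrFun hcT i) ⟨k, hk⟩⟩

/-- Minkowski's convex body theorem, with a dimension count in place of volumes. -/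
theorem exists_ne_zero_forall_lt_orderTop_mulVec {g : Matrix (Fin d) (Fin d) (Kt F)} {m : ℤ}
    (hg : ∀ i j, (m : WithTop ℤ) ≤ (g i j).orderTop) {n : Fin d → ℤ} (hn : ∑ i, n i < d * m) :
    ∃ c : Fin d → F[X], c ≠ 0 ∧
      ∀ i, (n i : WithTop ℤ) < ((g *ᵥ fun j => polyK F (c j)) i).orderTop := by
  obtain ⟨N, hN⟩ : ∃ N : ℕ, ∀ i, m - n i ≤ N := by
    obtain ⟨b, hb⟩ := (Set.finite_range fun i => m - n i).bddAbove
    exact ⟨b.toNat, fun i => (hb ⟨i, rfl⟩).trans b.self_le_toNat⟩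
  have hcard : ∑ i, (Finset.Ioc (m - N) (n i)).card < d * N := by
    zify
    calc ∑ i, ((Finset.Ioc (m - N) (n i)).card : ℤ) = ∑ i, (n i + (N - m)) :=
          Finset.sum_congr rfl fun i _ => by rw [Int.card_Ioc]; have := hN i; omega
      _ = ∑ i, n i + d * (N - m) := by simp [Finset.sum_add_distrib, mul_sub]
      _ < d * N := by linarith
  obtain ⟨c, hc0, hcN, hc⟩ := exists_ne_zero_forall_coeff_mulVec_eq_zero g hcard
  refine ⟨c, hc0, fun i => lt_orderTop_iff_forall_coeff_eq_zero.2 fun k hk => ?_⟩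
  rcases le_or_gt k (m - N) with hkN | hkN
  · exact lt_orderTop_iff_forall_coeff_eq_zero.1
      (lt_orderTop_mulVec hg (fun j => neg_lt_orderTop_polyK (hcN j)) i) k hkN
  · exact hc i k (Finset.mem_Ioc.2 ⟨hkN, hk⟩)

theorem exists_isEmptyBox_lattice_forall_sum_le {g : Matrix (Fin d) (Fin d) (Kt F)}
    (hg : g.det ≠ 0) :
    ∃ n, IsEmptyBox (lattice F g) n ∧ ∀ n', IsEmptyBox (lattice F g) n' → ∑ i, n i ≤ ∑ i, n' i := by
  have hinj : Function.Injective g.mulVec := mulVec_injective_iff_isUnit.2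
    ((isUnit_iff_isUnit_det g).2 hg.isUnit)
  obtain ⟨m, hm⟩ := exists_forall_le_orderTop fun p : Fin d × Fin d => g p.1 p.2
  have hbdd (n) (hn : IsEmptyBox (lattice F g) n) : d * m ≤ ∑ i, n i := by
    by_contra! hlt
    obtain ⟨c, hc0, hc⟩ := exists_ne_zero_forall_lt_orderTop_mulVec (fun i j => hm (i, j)) hlt
    have hzero := hinj ((hn _ ⟨c, rfl⟩ hc).trans (mulVec_zero g).symm)
    obtain ⟨j, hj⟩ := Function.ne_iff.1 hc0
    have := orderTop_polyK_nonpos hj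
    rw [show polyK F (c j) = 0 from congrFun hzero j] at this
    simp at this
  obtain ⟨n₀, hn₀⟩ := exists_isEmptyBox_lattice hg
  obtain ⟨_, ⟨n, hn, rfl⟩, hmin⟩ := Int.exists_least_of_bdd
    (P := fun s => ∃ n, IsEmptyBox (lattice F g) n ∧ ∑ i, n i = s)
    ⟨d * m, by rintro _ ⟨n, hn, rfl⟩; exact hbdd n hn⟩ ⟨_, n₀, hn₀, rfl⟩
  exact ⟨n, hn, fun n' hn' => hmin _ ⟨n', hn', rfl⟩⟩

theorem IsEmptyBox.exists_mem_orderTop_eq {Λ : Set (Fin d → Kt F)} {n : Fin d → ℤ}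
    (hn : IsEmptyBox Λ n) {j : Fin d} (hj : ¬ IsEmptyBox Λ (Function.update n j (n j - 1))) :
    ∃ v ∈ Λ, (v j).orderTop = n j ∧ ∀ i ≠ j, (n i : WithTop ℤ) < (v i).orderTop := by
  simp only [IsEmptyBox, not_forall] at hj
  obtain ⟨v, hv, hbox, hv0⟩ := hj
  have hoff (i) (hi : i ≠ j) : (n i : WithTop ℤ) < (v i).orderTop := by
    simpa only [Function.update_of_ne hi] using hbox i
  have hlt : ((n j - 1 : ℤ) : WithTop ℤ) < (v j).orderTop := by
    simpa only [Function.update_self] using hbox j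
  refine ⟨v, hv, le_antisymm ?_ ?_, hoff⟩
  · by_contra! hgt
    refine hv0 (hn v hv fun i => ?_)
    rcases eq_or_ne i j with rfl | hi
    exacts [hgt, hoff i hi]
  · rw [HahnSeries.le_orderTop_iff_forall]
    exact fun k hk => lt_orderTop_iff_forall_coeff_eq_zero.1 hlt k
      (Int.le_sub_one_of_lt (WithTop.coe_lt_coe.1 hk))

theorem IsEmptyBox.image_single_neg_mul {Λ : Set (Fin d → Kt F)} {n : Fin d → ℤ}
    (hn : IsEmptyBox Λ n) :
    IsEmptyBox ((fun v i => HahnSeries.single (-n i) 1 * v i) '' Λ) 0 := by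
  rintro _ ⟨v, hv, rfl⟩ hbox
  rw [hn v hv fun i => (pos_orderTop_single_neg_mul_iff _ _).1 (hbox i)]
  exact funext fun i => mul_zero _

theorem IsEmptyBox.lattice_eq {g : Matrix (Fin d) (Fin d) (Kt F)} (hg : IsEmptyBox (lattice F g) 0)
    {V : GL (Fin d) (Kt F)} (hV : V ∈ integralGL F (Fin d))
    (hcol : ∀ j, V.val.col j ∈ lattice F g) : lattice F g = lattice F V.val := by
  have hsub : lattice F V.val ⊆ lattice F g := by
    obtain ⟨P, hP⟩ := exists_eq_mul_map_polyK hcol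
    exact hP ▸ lattice_mul_map_polyK_subset g P
  refine Set.Subset.antisymm (fun v hv => ?_) hsub
  choose p hp using fun i => exists_polyK_sub_pos_orderTop ((V⁻¹.val *ᵥ v) i)
  refine ⟨p, sub_eq_zero.1 (hg _ (sub_mem_lattice hv (hsub ⟨p, rfl⟩)) fun i => ?_)⟩
  have hrem : v - V.val *ᵥ (fun j => polyK F (p j)) =
      V.val *ᵥ fun j => (V⁻¹.val *ᵥ v) j - polyK F (p j) := by
    change _ = V.val *ᵥ (V⁻¹.val *ᵥ v - fun j => polyK F (p j))
    rw [mulVec_sub, mulVec_mulVec, Units.mul_inv, one_mulVec]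
  rw [hrem]
  exact lt_orderTop_mulVec (orderTop_apply_nonneg_of_mem_integralGL hV) hp i

theorem exists_image_lattice_eq_lattice_integralGL {g : Matrix (Fin d) (Fin d) (Kt F)}
    (hg : g.det ≠ 0) :
    ∃ n : Fin d → ℤ, ∃ V ∈ integralGL F (Fin d),
      (fun v i => HahnSeries.single (-n i) 1 * v i) '' lattice F g = lattice F V.val := by
  obtain ⟨n, hn, hmin⟩ := exists_isEmptyBox_lattice_forall_sum_le hg
  have hnot (j) : ¬ IsEmptyBox (lattice F g) (Function.update n j (n j - 1)) := fun h => by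
    have := hmin _ h
    rw [Finset.sum_update_of_mem (Finset.mem_univ j),
      ← Finset.add_sum_erase _ n (Finset.mem_univ j), Finset.sdiff_singleton_eq_erase] at this
    omega
  choose v hv hdiag hoff using fun j => hn.exists_mem_orderTop_eq (hnot j)
  obtain ⟨V, hV, hVv⟩ := exists_mem_integralGL_of_orderTop
    (A := of fun i j => HahnSeries.single (-n i) 1 * v j i)
    (fun i => by
      rw [of_apply, HahnSeries.orderTop_mul, HahnSeries.orderTop_single one_ne_zero, hdiag]
      exact congrArg WithTop.some (neg_add_cancel (n i)))
    (fun i j hij => by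
      rw [of_apply, pos_orderTop_single_neg_mul_iff]
      exact hoff j i hij)
  refine ⟨n, V, hV, ?_⟩
  have hbox := hn.image_single_neg_mul
  have hcol (j) : V.val.col j ∈ (fun v i => HahnSeries.single (-n i) 1 * v i) '' lattice F g :=
    ⟨v j, hv j, hVv ▸ rfl⟩
  rw [image_lattice_eq_lattice_diagonal_mul] at hbox hcol ⊢
  exact hbox.lattice_eq hV hcol

theorem sum_eq_zero_of_image_lattice_eq {g : Matrix (Fin d) (Fin d) (Kt F)}
    (hg : g.det.orderTop = 0) {n : Fin d → ℤ} {V : GL (Fin d) (Kt F)}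
    (hV : V ∈ integralGL F (Fin d))
    (h : (fun v i => HahnSeries.single (-n i) 1 * v i) '' lattice F g = lattice F V.val) :
    ∑ i, n i = 0 := by
  rw [image_lattice_eq_lattice_diagonal_mul] at h
  have hdet : (diagonal (fun i => HahnSeries.single (-n i) 1) * g).det.orderTop =
      ((-∑ i, n i : ℤ) : WithTop ℤ) := by
    rw [det_mul, det_diagonal, prod_single_one, HahnSeries.orderTop_mul, hg,
      HahnSeries.orderTop_single one_ne_zero, add_zero, Finset.sum_neg_distrib]
  have hle := orderTop_det_le_of_lattice_subset h.le
    (HahnSeries.orderTop_ne_top.1 (hdet ▸ WithTop.coe_ne_top))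
  have hge := orderTop_det_le_of_lattice_subset h.ge
    (HahnSeries.orderTop_ne_top.1 (orderTop_det_of_mem_integralGL hV ▸ WithTop.zero_ne_top))
  have heq := hle.antisymm hge
  rw [hdet, orderTop_det_of_mem_integralGL hV] at heq
  exact neg_eq_zero.1 (WithTop.coe_eq_zero.1 heq)

end EmptyBox

/-! ### Norms -/

section Norm

variable {Fq : Type} [Field Fq] [Fintype Fq] {d : ℕ}

theorem Kabs_le_Kabs_iff {f g : Kt Fq} : Kabs Fq f ≤ Kabs Fq g ↔ g.orderTop ≤ f.orderTop := by
  have hq : (1 : ℝ) < Fintype.card Fq := Nat.one_lt_cast.2 Fintype.one_lt_card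
  have hpos (n : ℤ) : 0 < (Fintype.card Fq : ℝ) ^ n := zpow_pos (one_pos.trans hq) n
  rcases eq_or_ne f 0 with rfl | hf
  · rcases eq_or_ne g 0 with rfl | hg
    · simp
    · simpa [Kabs, hg] using (hpos _).le
  · rcases eq_or_ne g 0 with rfl | hg
    · simpa [Kabs, hf] using hpos _
    · rw [Kabs, Kabs, if_neg hf, if_neg hg, zpow_le_zpow_iff_right₀ hq, neg_le_neg_iff,
        ← HahnSeries.order_eq_orderTop_of_ne_zero hf,
        ← HahnSeries.order_eq_orderTop_of_ne_zero hg, WithTop.coe_le_coe]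

variable (Fq) in
theorem Kabs_one : Kabs Fq 1 = 1 := by
  simp [Kabs]

theorem Kabs_eq_one_iff {f : Kt Fq} : Kabs Fq f = 1 ↔ f.orderTop = 0 := by
  rw [← Kabs_one Fq, le_antisymm_iff, Kabs_le_Kabs_iff, Kabs_le_Kabs_iff, ← le_antisymm_iff,
    HahnSeries.orderTop_one, eq_comm]

theorem Kabs_le_vnorm (v : Fin d → Kt Fq) (i : Fin d) : Kabs Fq (v i) ≤ vnorm Fq v :=
  le_ciSup (f := fun i => Kabs Fq (v i)) (Set.finite_range _).bddAbove i

theorem vnorm_single_one (j : Fin d) : vnorm Fq (Pi.single j 1) = 1 := by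
  have : Nonempty (Fin d) := ⟨j⟩
  refine le_antisymm (ciSup_le fun i => ?_) ?_
  · rw [← Kabs_one Fq, Kabs_le_Kabs_iff, HahnSeries.orderTop_one]
    rcases eq_or_ne i j with rfl | hij
    · simp
    · simp [hij]
  · simpa [Kabs_one] using Kabs_le_vnorm (Fq := Fq) (Pi.single j 1) j

theorem vnorm_mulVec_le {A : Matrix (Fin d) (Fin d) (Kt Fq)} (hA : ∀ i j, 0 ≤ (A i j).orderTop)
    (v : Fin d → Kt Fq) : vnorm Fq (A *ᵥ v) ≤ vnorm Fq v := by
  cases isEmpty_or_nonempty (Fin d) with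
  | inl h => rw [Subsingleton.elim (A *ᵥ v) v]
  | inr h =>
    obtain ⟨j, hj⟩ := Finite.exists_min fun j => (v j).orderTop
    refine ciSup_le fun i => (Kabs_le_Kabs_iff.2 ?_).trans (Kabs_le_vnorm v j)
    simpa only [zero_add] using le_orderTop_mulVec hA hj i

theorem vnorm_mulVec_of_mem_integralGL {V : GL (Fin d) (Kt Fq)} (hV : V ∈ integralGL Fq (Fin d))
    (v : Fin d → Kt Fq) : vnorm Fq (V.val *ᵥ v) = vnorm Fq v := by
  refine (vnorm_mulVec_le (orderTop_apply_nonneg_of_mem_integralGL hV) v).antisymm ?_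
  calc vnorm Fq v = vnorm Fq (V⁻¹.val *ᵥ (V.val *ᵥ v)) := by
        rw [mulVec_mulVec, Units.inv_mul, one_mulVec]
    _ ≤ vnorm Fq (V.val *ᵥ v) :=
        vnorm_mulVec_le (orderTop_apply_nonneg_of_mem_integralGL (inv_mem hV)) _

theorem one_le_vnorm_polyK {c : Fin d → Fq[X]} (hc : c ≠ 0) :
    1 ≤ vnorm Fq fun j => polyK Fq (c j) := by
  obtain ⟨j, hj⟩ := Function.ne_iff.1 hc
  calc 1 = Kabs Fq 1 := (Kabs_one Fq).symm
    _ ≤ Kabs Fq (polyK Fq (c j)) := by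
        rw [Kabs_le_Kabs_iff, HahnSeries.orderTop_one]
        exact orderTop_polyK_nonpos hj
    _ ≤ vnorm Fq fun j => polyK Fq (c j) := Kabs_le_vnorm (fun j => polyK Fq (c j)) j

theorem isWellRounded_lattice_of_mem_integralGL {V : GL (Fin d) (Kt Fq)}
    (hV : V ∈ integralGL Fq (Fin d)) : IsWellRounded Fq (lattice Fq V.val) := by
  have hlin : LinearIndependent (Kt Fq) V.val.col := linearIndependent_cols_iff_isUnit.2 V.isUnit
  have hnorm (j) : vnorm Fq (V.val.col j) = 1 := by
    rw [← mulVec_single_one, vnorm_mulVec_of_mem_integralGL hV, vnorm_single_one]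
  refine ⟨V.val.col, col_mem_lattice V.val, hlin, fun j => (hnorm j).trans ?_⟩
  refine Eq.symm (IsLeast.csInf_eq ⟨⟨_, col_mem_lattice V.val j, hlin.ne_zero j, hnorm j⟩, ?_⟩)
  rintro _ ⟨_, ⟨c, rfl⟩, hv, rfl⟩
  rw [vnorm_mulVec_of_mem_integralGL hV]
  refine one_le_vnorm_polyK fun hc => hv ?_
  simp only [hc, Pi.zero_apply, map_zero]
  exact mulVec_zero V.val

end Norm

end

/-- Every `A`-orbit of unimodular lattices contains a well rounded lattice:
there is a diagonal matrix `a = diag(a₁,…,a_d)` with `a₁⋯a_d = 1` such that `aΛ` is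
well rounded. -/
theorem A_orbit_meets_wellRounded {d : ℕ} (hd : 2 ≤ d)
    (g : Matrix (Fin d) (Fin d) (Kt Fq)) (hg : Kabs Fq g.det = 1) :
    ∃ a : Fin d → Kt Fq, (∀ i, a i ≠ 0) ∧ ∏ i, a i = 1 ∧
      IsWellRounded Fq ((fun v i => a i * v i) '' lattice Fq g) := by
  have hord : g.det.orderTop = 0 := Kabs_eq_one_iff.1 hg
  have hdet : g.det ≠ 0 := HahnSeries.orderTop_ne_top.1 (hord ▸ WithTop.zero_ne_top)
  obtain ⟨n, V, hV, hΛ⟩ := exists_image_lattice_eq_lattice_integralGL hdet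
  have hsum : ∑ i, n i = 0 := sum_eq_zero_of_image_lattice_eq hord hV hΛ
  refine ⟨fun i => HahnSeries.single (-n i) 1, fun i => HahnSeries.single_ne_zero one_ne_zero,
    ?_, hΛ ▸ isWellRounded_lattice_of_mem_integralGL hV⟩
  rw [prod_single_one, Finset.sum_neg_distrib, hsum, neg_zero, HahnSeries.single_zero_one]
end
end

section
/- Let d ≥ 2, let a = (a₁,…,a_d) ∈ ℝ^d with a₁ + … + a_d = 0, and let Λ ⊆ K̃^d be a unimodular lattice such that λ_{1,a}(Λ) = λ_{2,a}(Λ) = … = λ_{d,a}(Λ). Then a₁,…,a_d are all congruent modulo 1, i.e. a_i − a_j ∈ ℤ for all i, j. -/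
noncomputable section

open scoped Classical

variable (Fq : Type) [Field Fq] [Fintype Fq]

/-- The twisted norm `‖v‖_a = max_i q^{a_i}·|v_i|` for `a ∈ ℝ^d`. -/
def anorm {d : ℕ} (a : Fin d → ℝ) (v : Fin d → Kt Fq) : ℝ :=
  ⨆ i, (Fintype.card Fq : ℝ) ^ a i * Kabs Fq (v i)

/-!
Any `g ∈ GL_d(K̃)` becomes `P · diag(x ^ k₁, …, x ^ k_d)` after right multiplication by an element
of `GL_d(𝔽_q[x])`, with `P` invertible over `𝔽_q⟦x⁻¹⟧` (Birkhoff factorization). Thus a lattice has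
a basis of vectors whose degrees `k_j` add up to `deg det g`, and some `k_j` is negative whenever
`deg det g` is. After rescaling the coordinates this is an exact form of Minkowski's theorem: if
`deg det g < ∑ m_i`, some nonzero lattice vector satisfies `deg v_i < m_i` for all `i`.

Write the common value of the successive minima as `q ^ L`. Absolute values are integral powers of
`q`, so `‖v‖_a < q ^ L` means `deg v_i < ⌈L - a_i⌉` and `‖v‖_a ≤ q ^ L` means
`deg v_i ≤ ⌊L - a_i⌋`. No nonzero lattice vector satisfies the former, whence
`∑ ⌈L - a_i⌉ ≤ deg det g` by Minkowski; `d` independent ones satisfy the latter, whence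
`deg det g ≤ ∑ ⌊L - a_i⌋` by the ultrametric Hadamard inequality. Hence every `L - a_i` is an
integer.
-/

section BirkhoffFactorization

open Matrix Polynomial PowerSeries HahnSeries

variable {F : Type} [Field F] {n : Type*} [Fintype n] [DecidableEq n]

lemma Kx_ne_zero : Kx F ≠ 0 := by simp [Kx]

lemma ofPowerSeries_X_mul_Kx : ofPowerSeries ℤ F PowerSeries.X * Kx F = 1 := by
  simp [Kx, ofPowerSeries_X]

lemma polyK_X : polyK F Polynomial.X = Kx F := by simp [polyK]

lemma polyK_C_s14 (r : F) : polyK F (Polynomial.C r) = ofPowerSeries ℤ F (PowerSeries.C r) := by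
  simp [polyK, HahnSeries.algebraMap_apply']

lemma coeff_polyK_s14 (c : F[X]) (m : ℕ) : (polyK F c).coeff (-m) = c.coeff m := by
  induction c using Polynomial.induction_on' with
  | add p q hp hq => rw [map_add, HahnSeries.coeff_add, hp, hq, Polynomial.coeff_add]
  | monomial k r =>
    rw [← Polynomial.C_mul_X_pow_eq_monomial, map_mul, map_pow, polyK_C_s14, polyK_X, ofPowerSeries_C]
    simp [Kx, HahnSeries.coeff_single, Polynomial.coeff_X_pow]

/-- The diagonal matrix `diag(x ^ k₁, …, x ^ kₙ)`. -/
def xDiagonal (k : n → ℤ) : Matrix n n (Kt F) := diagonal fun j => Kx F ^ k j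

lemma det_one_updateCol {R : Type*} [CommRing R] (j : n) (u : n → R) :
    ((1 : Matrix n n R).updateCol j u).det = u j := by
  rw [← cramer_apply, cramer_one, Module.End.one_apply]

lemma updateCol_smul_eq_mul_diagonal {R : Type*} [CommSemiring R] (M : Matrix n n R) (j : n)
    (c : R) (u : n → R) :
    M.updateCol j (c • u) = M.updateCol j u * diagonal (Function.update 1 j c) := by
  ext i l
  rcases eq_or_ne l j with rfl | hl
  · simp [mul_comm]
  · simp [hl]

lemma mapMatrix_X_mul_xDiagonal (k : n → ℤ) (j : n) :
    (ofPowerSeries ℤ F).mapMatrix (diagonal (Function.update 1 j PowerSeries.X)) * xDiagonal k =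
      xDiagonal (Function.update k j (k j - 1)) := by
  rw [RingHom.mapMatrix_apply, diagonal_map (map_zero _), xDiagonal, diagonal_mul_diagonal,
    xDiagonal]
  congr 1
  ext1 l
  rcases eq_or_ne l j with rfl | hl
  · have hX : ofPowerSeries ℤ F PowerSeries.X = (Kx F)⁻¹ :=
      eq_inv_of_mul_eq_one_left ofPowerSeries_X_mul_Kx
    simp [hX, zpow_sub_one₀ Kx_ne_zero, mul_comm]
  · simp [hl]

lemma xDiagonal_mul_updateCol {k : n → ℤ} {j : n} {α : n → F}
    (hk : ∀ l, α l ≠ 0 → k l ≤ k j) :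
    xDiagonal k * (polyK F).mapMatrix
        ((1 : Matrix n n F[X]).updateCol j
          fun l => Polynomial.C (α l) * Polynomial.X ^ (k j - k l).toNat) =
      (ofPowerSeries ℤ F).mapMatrix
        ((1 : Matrix n n F⟦X⟧).updateCol j fun l => PowerSeries.C (α l)) * xDiagonal k := by
  ext i l
  rw [xDiagonal, diagonal_mul, mul_diagonal, RingHom.mapMatrix_apply, RingHom.mapMatrix_apply,
    map_apply, map_apply]
  rcases eq_or_ne l j with rfl | hl
  · rw [updateCol_self, updateCol_self, map_mul, map_pow, polyK_C_s14, polyK_X]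
    by_cases hα : α i = 0
    · simp [hα]
    · rw [mul_left_comm, ← zpow_natCast, ← zpow_add₀ Kx_ne_zero,
        Int.toNat_of_nonneg (sub_nonneg.2 (hk i hα)), add_sub_cancel]
  · rw [updateCol_ne hl, updateCol_ne hl]
    rcases eq_or_ne i l with rfl | hi
    · simp
    · simp [hi]

lemma exists_mul_updateCol_eq_mul_diagonal_X {P : Matrix n n F⟦X⟧} {α : n → F}
    (hα : (PowerSeries.constantCoeff (R := F)).mapMatrix P *ᵥ α = 0) (j : n) :
    ∃ Q : Matrix n n F⟦X⟧,
      P * (1 : Matrix n n F⟦X⟧).updateCol j (fun l => PowerSeries.C (α l)) =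
        Q * diagonal (Function.update 1 j PowerSeries.X) := by
  have hX : ∀ i, PowerSeries.X ∣ (P *ᵥ fun l => PowerSeries.C (α l)) i := fun i => by
    rw [PowerSeries.X_dvd_iff, RingHom.map_mulVec]
    simpa [Function.comp_def] using congrFun hα i
  choose r hr using hX
  refine ⟨P.updateCol j r, ?_⟩
  rw [mul_updateCol, mul_one, ← updateCol_smul_eq_mul_diagonal]
  congr 1
  exact funext hr

/-- If the reduction of `P` modulo `x⁻¹` kills the nonzero vector `α`, then adding to a column of
largest degree among those where `α` is supported a suitable combination of the others lowers its
degree. -/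
lemma exists_column_reduction {P : Matrix n n F⟦X⟧} (hP0 : P.det ≠ 0) (hP : ¬IsUnit P.det)
    (k : n → ℤ) :
    ∃ (U : GL n F[X]) (Q : Matrix n n F⟦X⟧) (k' : n → ℤ), DvdNotUnit Q.det P.det ∧
      (ofPowerSeries ℤ F).mapMatrix P * xDiagonal k * (polyK F).mapMatrix U =
        (ofPowerSeries ℤ F).mapMatrix Q * xDiagonal k' := by
  have hdet : ((PowerSeries.constantCoeff (R := F)).mapMatrix P).det = 0 := by
    rwa [← RingHom.map_det, ← not_ne_iff, ← isUnit_iff_ne_zero,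
      ← PowerSeries.isUnit_iff_constantCoeff]
  obtain ⟨α, hα0, hα⟩ := exists_mulVec_eq_zero_iff.2 hdet
  obtain ⟨j, hj, hmax⟩ := Set.exists_max_image {l | α l ≠ 0} k (Set.toFinite _)
    (Function.ne_iff.1 hα0)
  obtain ⟨Q, hQ⟩ := exists_mul_updateCol_eq_mul_diagonal_X hα j
  let E : Matrix n n F[X] := (1 : Matrix n n F[X]).updateCol j
    fun l => Polynomial.C (α l) * Polynomial.X ^ (k j - k l).toNat
  have hE : IsUnit E.det := by
    simpa [E, det_one_updateCol] using hj
  refine ⟨GeneralLinearGroup.mk'' E hE, Q, Function.update k j (k j - 1), ?_, ?_⟩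
  · have hdetQ : P.det * PowerSeries.C (α j) = Q.det * PowerSeries.X := by
      have := congrArg det hQ
      rwa [det_mul, det_mul, det_one_updateCol, det_diagonal,
        Finset.prod_update_of_mem (Finset.mem_univ j), Pi.one_def, Finset.prod_const_one,
        mul_one] at this
    have hC : PowerSeries.C (α j) * PowerSeries.C (α j)⁻¹ = (1 : F⟦X⟧) := by
      rw [← map_mul, mul_inv_cancel₀ hj, map_one]
    refine ⟨fun h => hP0 ?_, PowerSeries.X * PowerSeries.C (α j)⁻¹, fun h => ?_, ?_⟩
    · exact (mul_eq_zero.1 (by rw [hdetQ, h, zero_mul])).resolve_right (by simpa using hj)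
    · exact PowerSeries.X_prime.not_isUnit (isUnit_of_mul_isUnit_left h)
    · rw [← mul_assoc, ← hdetQ, mul_assoc, hC, mul_one]
  · calc (ofPowerSeries ℤ F).mapMatrix P * xDiagonal k * (polyK F).mapMatrix E
        = (ofPowerSeries ℤ F).mapMatrix
            (P * (1 : Matrix n n F⟦X⟧).updateCol j fun l => PowerSeries.C (α l)) *
              xDiagonal k := by
          rw [mul_assoc, xDiagonal_mul_updateCol hmax, map_mul, mul_assoc]
      _ = (ofPowerSeries ℤ F).mapMatrix Q * xDiagonal (Function.update k j (k j - 1)) := by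
          rw [hQ, map_mul, mul_assoc, mapMatrix_X_mul_xDiagonal]

lemma exists_eq_mapMatrix_mul_xDiagonal (g : Matrix n n (Kt F)) :
    ∃ (P : Matrix n n F⟦X⟧) (k : n → ℤ), g = (ofPowerSeries ℤ F).mapMatrix P * xDiagonal k := by
  obtain ⟨⟨_, m, rfl⟩, hm⟩ := IsLocalization.exist_integer_multiples_of_finite
    (Submonoid.powers (PowerSeries.X : F⟦X⟧)) fun ij : n × n => g ij.1 ij.2
  choose p hp using hm
  refine ⟨of fun i j => p (i, j), fun _ => m, ?_⟩
  ext i j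
  have h : ofPowerSeries ℤ F (p (i, j)) = (ofPowerSeries ℤ F PowerSeries.X) ^ m * g i j := by
    simpa [Algebra.smul_def] using hp (i, j)
  rw [xDiagonal, mul_diagonal, RingHom.mapMatrix_apply, map_apply, of_apply, h, zpow_natCast,
    mul_right_comm, ← mul_pow, ofPowerSeries_X_mul_Kx, one_pow, one_mul]

theorem exists_birkhoff_factorization {g : Matrix n n (Kt F)} (hg : g.det ≠ 0) :
    ∃ (U : GL n F[X]) (P : GL n F⟦X⟧) (k : n → ℤ),
      g * (polyK F).mapMatrix U = (ofPowerSeries ℤ F).mapMatrix P * xDiagonal k := by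
  obtain ⟨P, k, rfl⟩ := exists_eq_mapMatrix_mul_xDiagonal g
  have hP0 : P.det ≠ 0 := by
    rintro h
    rw [det_mul, ← RingHom.map_det, h, map_zero, zero_mul] at hg
    exact hg rfl
  clear hg
  induction hD : P.det using IsWellFounded.induction (DvdNotUnit (α := F⟦X⟧)) generalizing P k with
  | _ D ih =>
    subst hD
    by_cases hP : IsUnit P.det
    · exact ⟨1, GeneralLinearGroup.mk'' P hP, k, by
        rw [Units.val_one, map_one, mul_one]; rfl⟩
    obtain ⟨U, Q, k', hQP, hU⟩ := exists_column_reduction hP0 hP k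
    obtain ⟨V, P', k'', hV⟩ := ih _ hQP Q k' hQP.1 rfl
    refine ⟨U * V, P', k'', ?_⟩
    rw [Units.val_mul, map_mul, ← mul_assoc, hU, hV]

end BirkhoffFactorization

section AbsoluteValue

open Matrix Polynomial PowerSeries HahnSeries

variable {F : Type} [Field F] [Fintype F]

lemma one_lt_card_real : (1 : ℝ) < Fintype.card F := mod_cast Fintype.one_lt_card

lemma card_real_pos : (0 : ℝ) < Fintype.card F := mod_cast Fintype.card_pos

lemma Kabs_of_ne_zero {f : Kt F} (hf : f ≠ 0) :
    Kabs F f = (Fintype.card F : ℝ) ^ (-f.order) := if_neg hf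

lemma Kabs_pos {f : Kt F} (hf : f ≠ 0) : 0 < Kabs F f := by
  rw [Kabs_of_ne_zero hf]
  exact zpow_pos card_real_pos _

lemma Kabs_zero : Kabs F 0 = 0 := if_pos rfl

lemma Kabs_nonneg (f : Kt F) : 0 ≤ Kabs F f := by
  rcases eq_or_ne f 0 with rfl | hf
  · exact Kabs_zero.ge
  · exact (Kabs_pos hf).le

lemma Kabs_mul (f g : Kt F) : Kabs F (f * g) = Kabs F f * Kabs F g := by
  rcases eq_or_ne f 0 with rfl | hf
  · simp [Kabs_zero]
  rcases eq_or_ne g 0 with rfl | hg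
  · simp [Kabs_zero]
  rw [Kabs_of_ne_zero hf, Kabs_of_ne_zero hg, Kabs_of_ne_zero (mul_ne_zero hf hg),
    order_mul hf hg, neg_add, zpow_add₀ card_real_pos.ne']

lemma isNonarchimedean_Kabs : IsNonarchimedean (Kabs F) := by
  intro f g
  rcases eq_or_ne f 0 with rfl | hf
  · simp
  rcases eq_or_ne g 0 with rfl | hg
  · simp
  rcases eq_or_ne (f + g) 0 with hfg | hfg
  · rw [hfg, Kabs_zero]
    exact le_max_of_le_left (Kabs_nonneg f)
  rw [Kabs_of_ne_zero hf, Kabs_of_ne_zero hg, Kabs_of_ne_zero hfg,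
    ← (zpow_right_mono₀ one_lt_card_real.le).map_max, max_neg_neg]
  exact zpow_right_mono₀ one_lt_card_real.le (neg_le_neg (min_order_le_order_add hfg))

/-- `|·|` on `K̃` as a bundled absolute value, giving access to the library's lemmas on finite
products, powers and signs. -/
def KabsValue : AbsoluteValue (Kt F) ℝ where
  toFun := Kabs F
  map_mul' := Kabs_mul
  nonneg' := Kabs_nonneg
  eq_zero' _ := ⟨fun h => by_contra fun hf => (Kabs_pos hf).ne' h, fun h => h ▸ Kabs_zero⟩
  add_le' _ _ := isNonarchimedean_Kabs.add_le Kabs_nonneg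

lemma KabsValue_apply (f : Kt F) : KabsValue f = Kabs F f := rfl

lemma Kabs_Kx_zpow (m : ℤ) : Kabs F (Kx F ^ m) = (Fintype.card F : ℝ) ^ m := by
  have hx : Kabs F (Kx F) = Fintype.card F := by
    rw [Kabs_of_ne_zero Kx_ne_zero, Kx, order_single one_ne_zero, neg_neg, zpow_one]
  rw [← KabsValue_apply, map_zpow₀, KabsValue_apply, hx]

lemma Kabs_ofPowerSeries_le_one (p : F⟦X⟧) : Kabs F (ofPowerSeries ℤ F p) ≤ 1 := by
  rcases eq_or_ne (ofPowerSeries ℤ F p) 0 with hp | hp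
  · rw [hp, Kabs_zero]
    exact zero_le_one
  · rw [Kabs_of_ne_zero hp]
    refine zpow_le_one_of_nonpos₀ one_lt_card_real.le (neg_nonpos.2 ?_)
    exact (le_order_iff_forall hp).2 fun m hm => by rw [PowerSeries.coeff_coe, if_pos hm]

lemma Kabs_ofPowerSeries_of_isUnit {p : F⟦X⟧} (hp : IsUnit p) :
    Kabs F (ofPowerSeries ℤ F p) = 1 := by
  obtain ⟨r, hr⟩ := hp.exists_right_inv
  have h : Kabs F (ofPowerSeries ℤ F p) * Kabs F (ofPowerSeries ℤ F r) = 1 := by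
    rw [← Kabs_mul, ← map_mul, hr, map_one, ← KabsValue_apply, map_one]
  refine (Kabs_ofPowerSeries_le_one p).antisymm (h ▸ ?_)
  exact mul_le_of_le_one_right (Kabs_nonneg _) (Kabs_ofPowerSeries_le_one r)

lemma Kabs_polyK_of_isUnit {c : F[X]} (hc : IsUnit c) : Kabs F (polyK F c) = 1 := by
  obtain ⟨r, hr, rfl⟩ := Polynomial.isUnit_iff.1 hc
  rw [polyK_C_s14]
  exact Kabs_ofPowerSeries_of_isUnit (hr.map _)

lemma one_le_Kabs_polyK {c : F[X]} (hc : c ≠ 0) : 1 ≤ Kabs F (polyK F c) := by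
  have hcoeff : (polyK F c).coeff (-c.natDegree) ≠ 0 := by
    rw [coeff_polyK_s14]
    exact Polynomial.leadingCoeff_ne_zero.2 hc
  rw [Kabs_of_ne_zero (ne_zero_of_coeff_ne_zero hcoeff)]
  have := order_le_of_coeff_ne_zero hcoeff
  exact one_le_zpow₀ one_lt_card_real.le (by omega)

lemma Kabs_le_rpow_iff_le_zpow_floor {f : Kt F} {y : ℝ} :
    Kabs F f ≤ (Fintype.card F : ℝ) ^ y ↔ Kabs F f ≤ (Fintype.card F : ℝ) ^ ⌊y⌋ := by
  rcases eq_or_ne f 0 with rfl | hf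
  · rw [Kabs_zero]
    exact iff_of_true (Real.rpow_nonneg card_real_pos.le _) (zpow_nonneg card_real_pos.le _)
  · rw [Kabs_of_ne_zero hf, zpow_le_zpow_iff_right₀ one_lt_card_real, ← Real.rpow_intCast,
      Real.rpow_le_rpow_left_iff one_lt_card_real, Int.le_floor]

lemma Kabs_lt_rpow_iff_lt_zpow_ceil {f : Kt F} {y : ℝ} :
    Kabs F f < (Fintype.card F : ℝ) ^ y ↔ Kabs F f < (Fintype.card F : ℝ) ^ ⌈y⌉ := by
  rcases eq_or_ne f 0 with rfl | hf
  · rw [Kabs_zero]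
    exact iff_of_true (Real.rpow_pos_of_pos card_real_pos _) (zpow_pos card_real_pos _)
  · rw [Kabs_of_ne_zero hf, zpow_lt_zpow_iff_right₀ one_lt_card_real, ← Real.rpow_intCast,
      Real.rpow_lt_rpow_left_iff one_lt_card_real, Int.lt_ceil]

end AbsoluteValue

section Minkowski

open Matrix Polynomial PowerSeries HahnSeries

lemma abv_det_le_prod_of_isNonarchimedean {R n : Type*} [CommRing R] [Nontrivial R]
    [Fintype n] [DecidableEq n] {abv : AbsoluteValue R ℝ} (habv : IsNonarchimedean abv)
    {V : Matrix n n R} {r : n → ℝ} (h : ∀ i j, abv (V i j) ≤ r i) : abv V.det ≤ ∏ i, r i := by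
  rw [det_apply]
  refine (habv.apply_sum_le_sup Finset.univ_nonempty).trans (Finset.sup'_le _ _ fun σ _ => ?_)
  rw [AbsoluteValue.map_units_int_smul, map_prod, ← Equiv.prod_comp σ r]
  exact Finset.prod_le_prod (fun _ _ => abv.nonneg _) fun i _ => h (σ i) i

lemma prod_zpow_eq_zpow_sum {G₀ ι : Type*} [CommGroupWithZero G₀] {a : G₀} (ha : a ≠ 0)
    (s : Finset ι) (k : ι → ℤ) : ∏ i ∈ s, a ^ k i = a ^ ∑ i ∈ s, k i := by
  induction s using Finset.cons_induction with
  | empty => simp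
  | cons i s hi ih => rw [Finset.prod_cons, Finset.sum_cons, zpow_add₀ ha, ih]

variable {F : Type} [Field F]

lemma col_mul_mapMatrix_polyK_mem_lattice {d : ℕ} (g : Matrix (Fin d) (Fin d) (Kt F))
    (C : Matrix (Fin d) (Fin d) F[X]) (j : Fin d) :
    (g * (polyK F).mapMatrix C).col j ∈ lattice F g :=
  ⟨fun i => C i j, rfl⟩

lemma exists_eq_mul_mapMatrix_polyK {d : ℕ} {g : Matrix (Fin d) (Fin d) (Kt F)}
    {v : Fin d → Fin d → Kt F} (hv : ∀ j, v j ∈ lattice F g) :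
    ∃ C : Matrix (Fin d) (Fin d) F[X], (of v)ᵀ = g * (polyK F).mapMatrix C := by
  choose c hc using hv
  exact ⟨(of c)ᵀ, Matrix.ext fun i j => congrFun (hc j) i⟩

variable [Fintype F]

lemma Kabs_det_xDiagonal {n : Type*} [Fintype n] [DecidableEq n] (k : n → ℤ) :
    Kabs F (xDiagonal k).det = (Fintype.card F : ℝ) ^ ∑ i, k i := by
  rw [xDiagonal, det_diagonal, prod_zpow_eq_zpow_sum Kx_ne_zero, Kabs_Kx_zpow]

lemma Kabs_det_of_birkhoff_factorization {n : Type*} [Fintype n] [DecidableEq n]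
    {g : Matrix n n (Kt F)} {U : GL n F[X]} {P : GL n F⟦X⟧} {k : n → ℤ}
    (h : g * (polyK F).mapMatrix U = (ofPowerSeries ℤ F).mapMatrix P * xDiagonal k) :
    Kabs F g.det = (Fintype.card F : ℝ) ^ ∑ i, k i := by
  have hU : Kabs F (polyK F (U : Matrix n n F[X]).det) = 1 :=
    Kabs_polyK_of_isUnit (isUnits_det_units U)
  have hP : Kabs F (ofPowerSeries ℤ F (P : Matrix n n F⟦X⟧).det) = 1 :=
    Kabs_ofPowerSeries_of_isUnit (isUnits_det_units P)
  simpa only [det_mul, ← RingHom.map_det, Kabs_mul, hU, hP, mul_one, one_mul,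
    Kabs_det_xDiagonal] using congrArg (fun M => Kabs F M.det) h

theorem exists_mem_lattice_Kabs_lt_zpow {d : ℕ} {g : Matrix (Fin d) (Fin d) (Kt F)}
    (hg : g.det ≠ 0) {m : Fin d → ℤ} (hm : Kabs F g.det < (Fintype.card F : ℝ) ^ ∑ i, m i) :
    ∃ v ∈ lattice F g, v ≠ 0 ∧ ∀ i, Kabs F (v i) < (Fintype.card F : ℝ) ^ m i := by
  have hD : (xDiagonal (F := F) (-m)).det ≠ 0 := by
    rw [xDiagonal, det_diagonal]
    exact Finset.prod_ne_zero_iff.2 fun i _ => zpow_ne_zero _ Kx_ne_zero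
  obtain ⟨U, P, k, hUP⟩ := exists_birkhoff_factorization
    (g := xDiagonal (-m) * g) (by rw [det_mul]; exact mul_ne_zero hD hg)
  have hk : ∑ j, k j < 0 := by
    have hdet := Kabs_det_of_birkhoff_factorization hUP
    rw [det_mul, Kabs_mul, Kabs_det_xDiagonal, Pi.neg_def, Finset.sum_neg_distrib,
      _root_.zpow_neg] at hdet
    rwa [← zpow_lt_one_iff_right₀ (one_lt_card_real (F := F)), ← hdet,
      inv_mul_lt_one₀ (zpow_pos card_real_pos _)]
  obtain ⟨j, -, hj⟩ := Finset.exists_lt_of_sum_lt (s := Finset.univ) (f := k) (g := 0)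
    (by simpa using hk)
  refine ⟨_, col_mul_mapMatrix_polyK_mem_lattice g U j, fun h0 => ?_, fun i => ?_⟩
  · have hgU : (g * (polyK F).mapMatrix U).det = 0 :=
      det_eq_zero_of_column_eq_zero j (congrFun h0)
    rw [det_mul, ← RingHom.map_det, mul_eq_zero, or_iff_right hg] at hgU
    exact one_ne_zero (by rw [← Kabs_polyK_of_isUnit (isUnits_det_units U), hgU, Kabs_zero])
  · have hentry : Kx F ^ (-m i) * (g * (polyK F).mapMatrix U).col j i =
        ofPowerSeries ℤ F ((P : Matrix (Fin d) (Fin d) F⟦X⟧) i j) * Kx F ^ k j := by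
      simpa [xDiagonal, mul_assoc, diagonal_mul, mul_diagonal] using congrFun₂ hUP i j
    have habs := congrArg (Kabs F) hentry
    rw [Kabs_mul, Kabs_mul, Kabs_Kx_zpow, Kabs_Kx_zpow, _root_.zpow_neg] at habs
    rw [← inv_mul_lt_one₀ (zpow_pos card_real_pos _), habs]
    exact (mul_le_of_le_one_left (zpow_nonneg card_real_pos.le _)
      (Kabs_ofPowerSeries_le_one _)).trans_lt (zpow_lt_one_of_neg₀ one_lt_card_real hj)

theorem Kabs_det_le_of_linearIndependent {d : ℕ} {g : Matrix (Fin d) (Fin d) (Kt F)}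
    {v : Fin d → Fin d → Kt F} (hv : ∀ j, v j ∈ lattice F g) (hli : LinearIndependent (Kt F) v)
    {r : Fin d → ℝ} (hr : ∀ i j, Kabs F (v j i) ≤ r i) : Kabs F g.det ≤ ∏ i, r i := by
  obtain ⟨C, hC⟩ := exists_eq_mul_mapMatrix_polyK hv
  have hdet : (of v)ᵀ.det = g.det * polyK F C.det := by rw [hC, det_mul, RingHom.map_det]
  have hv0 : (of v)ᵀ.det ≠ 0 := by
    rw [det_transpose]
    exact ((isUnit_iff_isUnit_det _).1 (linearIndependent_rows_iff_isUnit.1 hli)).ne_zero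
  have hC0 : C.det ≠ 0 := by
    rintro h
    exact hv0 (by rw [hdet, h, map_zero, mul_zero])
  calc Kabs F g.det ≤ Kabs F g.det * Kabs F (polyK F C.det) :=
        le_mul_of_one_le_right (Kabs_nonneg _) (one_le_Kabs_polyK hC0)
    _ = Kabs F (of v)ᵀ.det := by rw [hdet, Kabs_mul]
    _ ≤ ∏ i, r i := abv_det_le_prod_of_isNonarchimedean (abv := KabsValue) isNonarchimedean_Kabs hr

end Minkowski

section SuccessiveMinima

open Matrix Filter Topology

lemma floor_eq_self_of_sum_ceil_le_sum_floor {ι : Type*} {s : Finset ι} {y : ι → ℝ}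
    (h : ∑ i ∈ s, ⌈y i⌉ ≤ ∑ i ∈ s, ⌊y i⌋) {i : ι} (hi : i ∈ s) : (⌊y i⌋ : ℝ) = y i := by
  have hle : ∀ i ∈ s, ⌊y i⌋ ≤ ⌈y i⌉ := fun i _ => Int.floor_le_ceil (y i)
  have heq := (Finset.sum_eq_sum_iff_of_le hle).1 ((Finset.sum_le_sum hle).antisymm h) i hi
  exact (Int.floor_le (y i)).antisymm (heq ▸ Int.le_ceil (y i))

variable {F : Type} [Field F]

/-- The radii over which `minimaN` takes its infimum: those `r > 0` such that `Λ` contains `i`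
linearly independent vectors of norm at most `r`. -/
def admissibleRadii {d : ℕ} (nrm : (Fin d → Kt F) → ℝ) (Λ : Set (Fin d → Kt F)) (i : ℕ) : Set ℝ :=
  {r | 0 < r ∧ ∃ v : Fin i → Fin d → Kt F,
    (∀ j, v j ∈ Λ) ∧ LinearIndependent (Kt F) v ∧ ∀ j, nrm (v j) ≤ r}

lemma bddBelow_admissibleRadii {d : ℕ} (nrm : (Fin d → Kt F) → ℝ) (Λ : Set (Fin d → Kt F))
    (i : ℕ) : BddBelow (admissibleRadii nrm Λ i) :=
  ⟨0, fun _ hr => hr.1.le⟩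

lemma admissibleRadii_lattice_nonempty {d : ℕ} (nrm : (Fin d → Kt F) → ℝ)
    {g : Matrix (Fin d) (Fin d) (Kt F)} (hg : g.det ≠ 0) :
    (admissibleRadii nrm (lattice F g) d).Nonempty := by
  obtain ⟨M, hM⟩ := Finite.bddAbove_range fun j => nrm (g.col j)
  refine ⟨max 1 M, lt_max_of_lt_left one_pos, g.col, fun j => ?_, ?_, fun j => ?_⟩
  · simpa using col_mul_mapMatrix_polyK_mem_lattice g 1 j
  · exact linearIndependent_cols_iff_isUnit.2 ((isUnit_iff_isUnit_det g).2 hg.isUnit)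
  · exact le_max_of_le_right (hM (Set.mem_range_self j))

variable [Fintype F] {d : ℕ} {a : Fin d → ℝ} {g : Matrix (Fin d) (Fin d) (Kt F)} {L : ℝ}

lemma anorm_le_rpow_iff {v : Fin d → Kt F} :
    anorm F a v ≤ (Fintype.card F : ℝ) ^ L ↔
      ∀ i, Kabs F (v i) ≤ (Fintype.card F : ℝ) ^ (L - a i) := by
  have hq : (0 : ℝ) < Fintype.card F := card_real_pos
  simp_rw [Real.rpow_sub hq, le_div_iff₀' (Real.rpow_pos_of_pos hq _)]
  exact ⟨fun h i => (le_ciSup (Finite.bddAbove_range _) i).trans h,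
    fun h => Real.iSup_le h (Real.rpow_nonneg hq.le _)⟩

lemma anorm_lt_rpow_iff {v : Fin d → Kt F} :
    anorm F a v < (Fintype.card F : ℝ) ^ L ↔
      ∀ i, Kabs F (v i) < (Fintype.card F : ℝ) ^ (L - a i) := by
  have hq : (0 : ℝ) < Fintype.card F := card_real_pos
  simp_rw [Real.rpow_sub hq, lt_div_iff₀' (Real.rpow_pos_of_pos hq _)]
  refine ⟨fun h i => (le_ciSup (Finite.bddAbove_range _) i).trans_lt h, fun h => ?_⟩
  rcases isEmpty_or_nonempty (Fin d) with hd | hd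
  · rw [anorm, Real.iSup_of_isEmpty]
    exact Real.rpow_pos_of_pos hq _
  · obtain ⟨i, hi⟩ := exists_eq_ciSup_of_finite
      (f := fun i => (Fintype.card F : ℝ) ^ a i * Kabs F (v i))
    exact hi.symm.trans_lt (h i)

lemma anorm_pos {v : Fin d → Kt F} (hv : v ≠ 0) : 0 < anorm F a v := by
  obtain ⟨i, hi⟩ := Function.ne_iff.1 hv
  exact (mul_pos (Real.rpow_pos_of_pos card_real_pos _) (Kabs_pos hi)).trans_le
    (le_ciSup (f := fun i => (Fintype.card F : ℝ) ^ a i * Kabs F (v i)) (Finite.bddAbove_range _) i)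

lemma minimaN_one_le_anorm {Λ : Set (Fin d → Kt F)} {v : Fin d → Kt F} (hv : v ∈ Λ)
    (hv0 : v ≠ 0) : minimaN F (anorm F a) Λ 1 ≤ anorm F a v :=
  csInf_le (bddBelow_admissibleRadii _ _ _) ⟨anorm_pos hv0, fun _ => v, fun _ => hv,
    linearIndependent_unique_iff.2 hv0, fun _ => le_rfl⟩

lemma zpow_sum_ceil_le_Kabs_det (hg : g.det ≠ 0)
    (hL : (Fintype.card F : ℝ) ^ L ≤ minimaN F (anorm F a) (lattice F g) 1) :
    (Fintype.card F : ℝ) ^ ∑ i, ⌈L - a i⌉ ≤ Kabs F g.det := by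
  by_contra! hlt
  obtain ⟨v, hv, hv0, hvlt⟩ := exists_mem_lattice_Kabs_lt_zpow hg hlt
  have hnorm : anorm F a v < (Fintype.card F : ℝ) ^ L :=
    anorm_lt_rpow_iff.2 fun i => Kabs_lt_rpow_iff_lt_zpow_ceil.2 (hvlt i)
  exact (hL.trans (minimaN_one_le_anorm hv hv0)).not_gt hnorm

lemma Kabs_det_le_zpow_sum_floor_of_mem {r : ℝ}
    (hr : r ∈ admissibleRadii (anorm F a) (lattice F g) d) (hL : r ≤ (Fintype.card F : ℝ) ^ L) :
    Kabs F g.det ≤ (Fintype.card F : ℝ) ^ ∑ i, ⌊L - a i⌋ := by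
  obtain ⟨-, v, hv, hli, hvr⟩ := hr
  rw [← prod_zpow_eq_zpow_sum card_real_pos.ne']
  exact Kabs_det_le_of_linearIndependent hv hli fun i j =>
    Kabs_le_rpow_iff_le_zpow_floor.1 (anorm_le_rpow_iff.1 ((hvr j).trans hL) i)

lemma Kabs_det_le_zpow_sum_floor (hg : g.det ≠ 0)
    (hL : minimaN F (anorm F a) (lattice F g) d ≤ (Fintype.card F : ℝ) ^ L) :
    Kabs F g.det ≤ (Fintype.card F : ℝ) ^ ∑ i, ⌊L - a i⌋ := by
  have hfloor : ∀ᶠ L' in 𝓝[>] L, ∀ i, ⌊L' - a i⌋ = ⌊L - a i⌋ := by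
    refine eventually_all.2 fun i => ?_
    have hsub : Tendsto (fun L' => L' - a i) (𝓝[>] L) (𝓝[≥] (L - a i)) :=
      tendsto_nhdsWithin_iff.2 ⟨((continuous_sub_right (a i)).tendsto L).mono_left
        nhdsWithin_le_nhds, eventually_mem_nhdsWithin.mono fun L' hL' =>
          sub_le_sub_right (le_of_lt hL') (a i)⟩
    exact tendsto_pure.1 ((tendsto_floor_right_pure_floor (L - a i)).comp hsub)
  obtain ⟨L', hL', hLL'⟩ := (hfloor.and self_mem_nhdsWithin).exists
  obtain ⟨r, hr, hrL'⟩ := exists_lt_of_csInf_lt (admissibleRadii_lattice_nonempty _ hg)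
    (hL.trans_lt (Real.rpow_lt_rpow_of_exponent_lt one_lt_card_real hLL'))
  simpa only [hL'] using Kabs_det_le_zpow_sum_floor_of_mem hr hrL'.le

lemma minimaN_pos (hd : d ≠ 0) (hg : g.det ≠ 0) :
    0 < minimaN F (anorm F a) (lattice F g) d := by
  by_contra! hle
  obtain ⟨D, hD⟩ : ∃ D : ℤ, Kabs F g.det = (Fintype.card F : ℝ) ^ D := ⟨_, Kabs_of_ne_zero hg⟩
  obtain ⟨L, hL⟩ : ∃ L : ℝ, d * L = D + ∑ i, a i - 1 :=
    ⟨_, mul_div_cancel₀ _ (Nat.cast_ne_zero.2 hd)⟩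
  have hfloor : D ≤ ∑ i, ⌊L - a i⌋ := by
    have hdet := Kabs_det_le_zpow_sum_floor (L := L) hg
      (hle.trans (Real.rpow_nonneg card_real_pos.le L))
    rwa [hD, zpow_le_zpow_iff_right₀ one_lt_card_real] at hdet
  have hsum : (D : ℝ) ≤ D - 1 :=
    calc (D : ℝ) ≤ ∑ i, (⌊L - a i⌋ : ℝ) := mod_cast hfloor
      _ ≤ ∑ i, (L - a i) := Finset.sum_le_sum fun i _ => Int.floor_le _
      _ = d * L - ∑ i, a i := by simp
      _ = D - 1 := by rw [hL]; ring
  linarith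

end SuccessiveMinima

theorem congruent_mod_one_of_trivial_flag_general {F : Type} [Field F] [Fintype F] {d : ℕ}
    (a : Fin d → ℝ) (g : Matrix (Fin d) (Fin d) (Kt F)) (hg : g.det ≠ 0)
    (heq : minimaN F (anorm F a) (lattice F g) d = minimaN F (anorm F a) (lattice F g) 1) :
    ∀ i j : Fin d, ∃ n : ℤ, a i - a j = (n : ℝ) := by
  intro i j
  have hq : (1 : ℝ) < Fintype.card F := one_lt_card_real
  obtain ⟨L, hL⟩ : ∃ L : ℝ, (Fintype.card F : ℝ) ^ L = minimaN F (anorm F a) (lattice F g) d :=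
    ⟨_, Real.rpow_logb (zero_lt_one.trans hq) hq.ne' (minimaN_pos i.pos.ne' hg)⟩
  have hceil_le_floor : ∑ l, ⌈L - a l⌉ ≤ ∑ l, ⌊L - a l⌋ := by
    rw [← zpow_le_zpow_iff_right₀ hq]
    exact (zpow_sum_ceil_le_Kabs_det hg (hL.trans heq).le).trans
      (Kabs_det_le_zpow_sum_floor hg hL.ge)
  have hfloor (l : Fin d) : (⌊L - a l⌋ : ℝ) = L - a l :=
    floor_eq_self_of_sum_ceil_le_sum_floor hceil_le_floor (Finset.mem_univ l)
  refine ⟨⌊L - a j⌋ - ⌊L - a i⌋, ?_⟩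
  rw [Int.cast_sub, hfloor, hfloor]
  ring

/-- If all the `‖·‖_a`-successive minima of a unimodular lattice coincide,
then the coordinates of `a` are all congruent modulo `1`. -/
theorem congruent_mod_one_of_trivial_flag {d : ℕ} (hd : 2 ≤ d)
    (a : Fin d → ℝ) (ha : ∑ i, a i = 0)
    (g : Matrix (Fin d) (Fin d) (Kt Fq)) (hg : Kabs Fq g.det = 1)
    (heq : ∀ i : Fin d, minimaN Fq (anorm Fq a) (lattice Fq g) ((i : ℕ) + 1)
      = minimaN Fq (anorm Fq a) (lattice Fq g) 1) :
    ∀ i j : Fin d, ∃ n : ℤ, a i - a j = (n : ℝ) := by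
  have hdet : g.det ≠ 0 := fun h => zero_ne_one (by rw [← hg, h, Kabs_zero])
  have heq_d := heq ⟨d - 1, by omega⟩
  rw [Nat.sub_add_cancel (by omega)] at heq_d
  exact congruent_mod_one_of_trivial_flag_general a g hdet heq_d
end
end
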